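/- Let X be a real inner product space, K ≥ 1 an integer, and let X̄ = X^K be the product space with inner product ⟨x̄, ȳ⟩ = Σ_{k=1}^K ⟨x̄_k, ȳ_k⟩. Define Q⁻ : X̄ → X by Q⁻(x̄) = Σ_{k=1}^K x̄_k and Q⁺ : X → X̄ by Q⁺(x) = (x, …, x). If F : X → X is α-cocoercive (α > 0), then the composition Q⁺ ∘ F ∘ Q⁻ : X̄ → X̄ is (α/K)-cocoercive with respect to the product inner product. -/

import Mathlib

open RealInnerProductSpace

/-!
`Q⁺` is adjoint to `Q⁻`, so comonotonicity of `F` at the points `Q⁻ x̄`, `Q⁻ ȳ` is an inequality for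
`⟪Q⁺ (F (Q⁻ x̄)) - Q⁺ (F (Q⁻ ȳ)), x̄ - ȳ⟫`; the constant changes by the factor `K` in
`‖Q⁺ u‖² = K ‖u‖²`.
-/

section Comonotone

variable {X Y : Type*} [NormedAddCommGroup X] [InnerProductSpace ℝ X]
  [NormedAddCommGroup Y] [InnerProductSpace ℝ Y] {F : X → X} {α β : ℝ}

/-- `F` is `α`-comonotone. For `0 < α` this is `α`-cocoercivity, for `α = 0` monotonicity, and
for `α < 0` cohypomonotonicity with constant `-α`. -/
def IsComonotone (α : ℝ) (F : X → X) : Prop :=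
  ∀ x y : X, α * ‖F x - F y‖ ^ 2 ≤ ⟪F x - F y, x - y⟫

theorem IsComonotone.comp_of_isAdjointPair {B : X →ₗ[ℝ] Y} {A : Y →ₗ[ℝ] X}
    (hF : IsComonotone α F) (hBA : LinearMap.IsAdjointPair (innerₗ X) (innerₗ Y) B A)
    (hB : ∀ u : X, β * ‖B u‖ ^ 2 ≤ α * ‖u‖ ^ 2) :
    IsComonotone β (B ∘ F ∘ A) := by
  intro x y
  calc β * ‖B (F (A x)) - B (F (A y))‖ ^ 2
      = β * ‖B (F (A x) - F (A y))‖ ^ 2 := by rw [map_sub]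
    _ ≤ α * ‖F (A x) - F (A y)‖ ^ 2 := hB _
    _ ≤ ⟪F (A x) - F (A y), A x - A y⟫ := hF _ _
    _ = ⟪F (A x) - F (A y), A (x - y)⟫ := by rw [map_sub]
    _ = ⟪B (F (A x) - F (A y)), x - y⟫ := (hBA _ _).symm
    _ = ⟪B (F (A x)) - B (F (A y)), x - y⟫ := by rw [map_sub]

end Comonotone

section ProductSpace

variable (ι X : Type*) [NormedAddCommGroup X] [InnerProductSpace ℝ X]

/-- The diagonal embedding `Q⁺ : X → X^ι`, `x ↦ (x, …, x)`, into the product space `PiLp 2`. -/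
def productDiagonal : X →ₗ[ℝ] PiLp 2 (fun _ : ι => X) :=
  (WithLp.linearEquiv 2 ℝ (ι → X)).symm.toLinearMap ∘ₗ LinearMap.const

/-- The summation map `Q⁻ : X^ι → X` on the product space `PiLp 2`. -/
def productSum [Fintype ι] : PiLp 2 (fun _ : ι => X) →ₗ[ℝ] X :=
  ∑ i, PiLp.projₗ 2 (fun _ : ι => X) i

variable {ι X}

@[simp]
theorem productDiagonal_apply (u : X) (i : ι) : productDiagonal ι X u i = u :=
  rfl

variable [Fintype ι]

@[simp]
theorem productSum_apply (x : PiLp 2 (fun _ : ι => X)) : productSum ι X x = ∑ i, x i := by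
  simp [productSum]

theorem isAdjointPair_productDiagonal_productSum :
    LinearMap.IsAdjointPair (innerₗ X) (innerₗ (PiLp 2 fun _ : ι => X))
      (productDiagonal ι X) (productSum ι X) := by
  intro u x
  simp only [innerₗ_apply_apply, PiLp.inner_apply, productDiagonal_apply, productSum_apply,
    inner_sum]

theorem norm_sq_productDiagonal (u : X) :
    ‖productDiagonal ι X u‖ ^ 2 = Fintype.card ι * ‖u‖ ^ 2 := by
  simp [PiLp.norm_sq_eq_of_L2]

theorem stmt_12_general [Nonempty ι] {F : X → X} {α : ℝ} (hF : IsComonotone α F) :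
    IsComonotone (α / Fintype.card ι) (productDiagonal ι X ∘ F ∘ productSum ι X) := by
  refine hF.comp_of_isAdjointPair isAdjointPair_productDiagonal_productSum fun u => ?_
  have hcard : (Fintype.card ι : ℝ) ≠ 0 := Nat.cast_ne_zero.mpr Fintype.card_ne_zero
  rw [norm_sq_productDiagonal, ← mul_assoc, div_mul_cancel₀ _ hcard]

end ProductSpace

/-- If `F : X → X` is `α`-cocoercive, then `Q⁺ ∘ F ∘ Q⁻` is `(α / K)`-cocoercive on the
product space `X̄ = Xᴷ` (with the product inner product, i.e. `PiLp 2`), where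
`Q⁻ xb = ∑ k, xb k` and `Q⁺ x = (x, …, x)`. -/
theorem stmt_12 {X : Type*} [NormedAddCommGroup X] [InnerProductSpace ℝ X]
    (K : ℕ) (hK : 1 ≤ K)
    (F : X → X) (α : ℝ) (hα : 0 < α)
    (hF : ∀ x y : X, α * ‖F x - F y‖ ^ 2 ≤ ⟪F x - F y, x - y⟫)
    (G : PiLp 2 (fun _ : Fin K => X) → PiLp 2 (fun _ : Fin K => X))
    (hG : ∀ (xb : PiLp 2 (fun _ : Fin K => X)) (k : Fin K), G xb k = F (∑ j, xb j)) :
    ∀ xb yb : PiLp 2 (fun _ : Fin K => X),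
      (α / K) * ‖G xb - G yb‖ ^ 2 ≤ ⟪G xb - G yb, xb - yb⟫ := by
  have : Nonempty (Fin K) := Fin.pos_iff_nonempty.mp hK
  obtain rfl : G = productDiagonal (Fin K) X ∘ F ∘ productSum (Fin K) X := by
    ext xb k
    simp [hG]
  simpa only [IsComonotone, Function.comp_apply, Fintype.card_fin] using
    stmt_12_general (ι := Fin K) hF
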